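/- Let n ≥ 1, T > 0, and let C be the n×n matrix of all ones with weight function g_T(x) = e^{x/T}. Then x ∈ Σ is a fixed point of u_T if and only if x ∈ Σ and there exist a subset K ⊆ {1,…,n}, y ∈ [0,T] and z ≥ T such that y·e^{−y/T} = z·e^{−z/T}, |K|·y + (n−|K|)·z = 1, x_i = y for all i ∈ K, and x_i = z for all i ∉ K. -/

import Mathlib

open Set

/-- For the complete graph (the matrix of all ones) with weight `g_T(x) = e^{x/T}`,
the unique invariant measure of `M_T(x)` is `u_T(x)_i = e^{x_i/T} / Σ_k e^{x_k/T}`. -/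
noncomputable def uT (n : ℕ) (T : ℝ) (x : Fin n → ℝ) : Fin n → ℝ :=
  fun i => Real.exp (x i / T) / ∑ k, Real.exp (x k / T)

/-!
A fixed point of `u_T` is a probability vector proportional to its own weights `e^{x_i/T}`, which
means that `φ(s) = s e^{-s/T}` takes the same value at all coordinates. Since `φ` increases strictly
up to `T`, decreases strictly after `T`, vanishes at `0` and tends to `0` at infinity, each of its
level sets through a positive point is a pair `{y, z}` with `0 ≤ y ≤ T ≤ z`.
-/

open Filter Topology

section FiniteSums

variable {ι : Type*} [Fintype ι]

theorem div_sum_eq_iff_sum_eq_one_and_exists_smul {F : Type*} [Field F] {w x : ι → F}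
    (hw : ∑ k, w k ≠ 0) :
    (fun i => w i / ∑ k, w k) = x ↔ ∑ i, x i = 1 ∧ ∃ c : F, x = c • w := by
  constructor
  · rintro rfl
    refine ⟨by rw [← Finset.sum_div, div_self hw], (∑ k, w k)⁻¹, funext fun i => ?_⟩
    exact div_eq_inv_mul _ _
  · rintro ⟨hsum, c, rfl⟩
    have hc : c * ∑ k, w k = 1 := by
      simpa only [Pi.smul_apply, smul_eq_mul, ← Finset.mul_sum] using hsum
    funext i
    rw [div_eq_inv_mul, ← eq_inv_of_mul_eq_one_left hc, Pi.smul_apply, smul_eq_mul]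

theorem sum_eq_card_mul_add_card_sub_mul {R : Type*} [NonAssocRing R] {x : ι → R} {K : Finset ι}
    {y z : R} (hK : ∀ i ∈ K, x i = y) (hK' : ∀ i ∉ K, x i = z) :
    ∑ i, x i = K.card * y + (Fintype.card ι - K.card) * z := by
  classical
  rw [← Finset.sum_add_sum_compl K, Finset.sum_congr rfl hK,
    Finset.sum_congr rfl fun i hi => hK' i (Finset.mem_compl.1 hi), Finset.sum_const,
    Finset.sum_const, nsmul_eq_mul, nsmul_eq_mul, Finset.card_compl,
    Nat.cast_sub (Finset.card_le_univ K)]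

end FiniteSums

/-- The function `s ↦ s e^{-s/T}`, which takes the same value at all coordinates of a fixed point of
`u_T`. -/
noncomputable def mulExpNegDiv (T s : ℝ) : ℝ :=
  s * Real.exp (-s / T)

section MulExpNegDiv

variable {T : ℝ}

theorem mulExpNegDiv_pos {s : ℝ} (hs : 0 < s) : 0 < mulExpNegDiv T s :=
  mul_pos hs (Real.exp_pos _)

theorem mulExpNegDiv_eq_iff {s c : ℝ} : mulExpNegDiv T s = c ↔ s = c * Real.exp (s / T) := by
  rw [mulExpNegDiv, neg_div, Real.exp_neg, mul_inv_eq_iff_eq_mul₀ (Real.exp_ne_zero _)]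

theorem continuous_mulExpNegDiv : Continuous (mulExpNegDiv T) := by
  unfold mulExpNegDiv
  fun_prop

theorem hasDerivAt_mulExpNegDiv (s : ℝ) :
    HasDerivAt (mulExpNegDiv T) (Real.exp (-s / T) * (1 - s / T)) s := by
  have hexp : HasDerivAt (fun s => Real.exp (-s / T)) (Real.exp (-s / T) * (-1 / T)) s :=
    ((hasDerivAt_id s).neg.div_const T).exp
  refine ((hasDerivAt_id' s).mul hexp).congr_deriv ?_
  ring

theorem strictMonoOn_mulExpNegDiv (hT : 0 < T) : StrictMonoOn (mulExpNegDiv T) (Iic T) := by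
  refine strictMonoOn_of_deriv_pos (convex_Iic T) continuous_mulExpNegDiv.continuousOn
    fun s hs => ?_
  rw [interior_Iic, mem_Iio] at hs
  rw [(hasDerivAt_mulExpNegDiv s).deriv]
  exact mul_pos (Real.exp_pos _) (sub_pos.2 ((div_lt_one hT).2 hs))

theorem strictAntiOn_mulExpNegDiv (hT : 0 < T) : StrictAntiOn (mulExpNegDiv T) (Ici T) := by
  refine strictAntiOn_of_deriv_neg (convex_Ici T) continuous_mulExpNegDiv.continuousOn
    fun s hs => ?_
  rw [interior_Ici, mem_Ioi] at hs
  rw [(hasDerivAt_mulExpNegDiv s).deriv]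
  exact mul_neg_of_pos_of_neg (Real.exp_pos _) (sub_neg.2 ((one_lt_div hT).2 hs))

theorem mulExpNegDiv_le_mulExpNegDiv_self (hT : 0 < T) (s : ℝ) :
    mulExpNegDiv T s ≤ mulExpNegDiv T T := by
  rcases le_total s T with hs | hs
  · exact (strictMonoOn_mulExpNegDiv hT).monotoneOn hs self_mem_Iic hs
  · exact (strictAntiOn_mulExpNegDiv hT).antitoneOn self_mem_Ici hs hs

theorem tendsto_mulExpNegDiv_atTop (hT : 0 < T) :
    Tendsto (mulExpNegDiv T) atTop (𝓝 0) := by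
  refine (tendsto_rpow_mul_exp_neg_mul_atTop_nhds_zero 1 T⁻¹ (inv_pos.2 hT)).congr fun s => ?_
  rw [mulExpNegDiv, Real.rpow_one, neg_mul, ← div_eq_inv_mul, neg_div]

theorem surjOn_mulExpNegDiv_Icc (hT : 0 ≤ T) :
    SurjOn (mulExpNegDiv T) (Icc 0 T) (Icc 0 (mulExpNegDiv T T)) := by
  have hzero : mulExpNegDiv T 0 = 0 := zero_mul _
  simpa only [hzero, SurjOn] using
    intermediate_value_Icc hT (continuous_mulExpNegDiv (T := T)).continuousOn

theorem surjOn_mulExpNegDiv_Ici (hT : 0 < T) :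
    SurjOn (mulExpNegDiv T) (Ici T) (Ioc 0 (mulExpNegDiv T T)) :=
  isPreconnected_Ici.intermediate_value_Ioc self_mem_Ici (le_principal_iff.2 (Ici_mem_atTop T))
    continuous_mulExpNegDiv.continuousOn (tendsto_mulExpNegDiv_atTop hT)

theorem exists_mulExpNegDiv_preimage_eq_pair (hT : 0 < T) {c : ℝ}
    (hc : c ∈ Ioc 0 (mulExpNegDiv T T)) :
    ∃ y ∈ Icc 0 T, ∃ z ∈ Ici T, mulExpNegDiv T ⁻¹' {c} = {y, z} := by
  obtain ⟨y, hy, rfl⟩ := surjOn_mulExpNegDiv_Icc hT.le (Ioc_subset_Icc_self hc)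
  obtain ⟨z, hz, hzy⟩ := surjOn_mulExpNegDiv_Ici hT hc
  refine ⟨y, hy, z, hz, Subset.antisymm (fun s hs => ?_) ?_⟩
  · rcases le_total s T with hsT | hsT
    · exact Or.inl ((strictMonoOn_mulExpNegDiv hT).injOn hsT hy.2 hs)
    · exact Or.inr ((strictAntiOn_mulExpNegDiv hT).injOn hsT hz (hs.trans hzy.symm))
  · rintro s (rfl | rfl)
    exacts [rfl, hzy]

theorem exists_two_levels_of_mulExpNegDiv_eq (hT : 0 < T) {ι : Type*} [Finite ι] {x : ι → ℝ}
    {c : ℝ} (hc : c ∈ Ioc 0 (mulExpNegDiv T T)) (hx : ∀ i, mulExpNegDiv T (x i) = c) :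
    ∃ (K : Finset ι) (y z : ℝ), y ∈ Icc 0 T ∧ T ≤ z ∧ mulExpNegDiv T y = mulExpNegDiv T z ∧
      (∀ i ∈ K, x i = y) ∧ ∀ i ∉ K, x i = z := by
  cases nonempty_fintype ι
  obtain ⟨y, hy, z, hz, hlevel⟩ := exists_mulExpNegDiv_preimage_eq_pair hT hc
  have hyc : mulExpNegDiv T y = c := hlevel.ge (mem_insert y {z})
  have hzc : mulExpNegDiv T z = c := hlevel.ge (mem_insert_of_mem y rfl)
  refine ⟨Finset.univ.filter (x · = y), y, z, hy, hz, hyc.trans hzc.symm,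
    fun i hi => (Finset.mem_filter.1 hi).2, fun i hi => ?_⟩
  exact (hlevel.le (hx i)).resolve_left fun hxy =>
    hi (Finset.mem_filter.2 ⟨Finset.mem_univ i, hxy⟩)

end MulExpNegDiv

theorem uT_eq_self_iff {n : ℕ} (hn : 0 < n) {T : ℝ} {x : Fin n → ℝ} :
    uT n T x = x ↔ ∑ i, x i = 1 ∧ ∃ c, ∀ i, mulExpNegDiv T (x i) = c := by
  have hweights : 0 < ∑ k, Real.exp (x k / T) :=
    Finset.sum_pos (fun _ _ => Real.exp_pos _) ⟨⟨0, hn⟩, Finset.mem_univ _⟩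
  simp only [mulExpNegDiv_eq_iff]
  exact (div_sum_eq_iff_sum_eq_one_and_exists_smul hweights.ne').trans
    (and_congr_right fun _ => exists_congr fun _ => funext_iff)

theorem complete_graph_fixed_point_two_level_characterization_general
    {n : ℕ} (hn : 0 < n) {T : ℝ} (hT : 0 < T) (x : Fin n → ℝ) :
    uT n T x = x ↔
      ∃ (K : Finset (Fin n)) (y z : ℝ),
        y ∈ Set.Icc 0 T ∧ T ≤ z ∧
        y * Real.exp (-y / T) = z * Real.exp (-z / T) ∧
        (K.card : ℝ) * y + ((n : ℝ) - K.card) * z = 1 ∧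
        (∀ i ∈ K, x i = y) ∧ (∀ i ∉ K, x i = z) := by
  rw [uT_eq_self_iff hn]
  constructor
  · rintro ⟨hsum, c, hc⟩
    obtain ⟨j, -, hj⟩ : ∃ j ∈ Finset.univ, 0 < x j :=
      Finset.exists_lt_of_sum_lt (by simp [hsum])
    have hcT : c ∈ Ioc 0 (mulExpNegDiv T T) :=
      hc j ▸ ⟨mulExpNegDiv_pos hj, mulExpNegDiv_le_mulExpNegDiv_self hT (x j)⟩
    obtain ⟨K, y, z, hy, hz, hyz, hK, hK'⟩ := exists_two_levels_of_mulExpNegDiv_eq hT hcT hc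
    refine ⟨K, y, z, hy, hz, hyz, ?_, hK, hK'⟩
    rw [← hsum, sum_eq_card_mul_add_card_sub_mul hK hK', Fintype.card_fin]
  · rintro ⟨K, y, z, -, -, hyz, hsum, hK, hK'⟩
    refine ⟨?_, mulExpNegDiv T z, fun i => ?_⟩
    · rw [sum_eq_card_mul_add_card_sub_mul hK hK', Fintype.card_fin, hsum]
    · by_cases hi : i ∈ K
      · rw [hK i hi]
        exact hyz
      · rw [hK' i hi]

/-- For the complete graph, `x ∈ Σ` is a fixed point of `u_T` if and only if there are
`K ⊆ {1,…,n}`, `y ∈ [0,T]` and `z ≥ T` with `y·e^{−y/T} = z·e^{−z/T}`,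
`|K|·y + (n−|K|)·z = 1`, `x_i = y` on `K` and `x_i = z` off `K`. -/
theorem complete_graph_fixed_point_two_level_characterization
    (n : ℕ) (hn : 0 < n) (T : ℝ) (hT : 0 < T) :
    ∀ x ∈ stdSimplex ℝ (Fin n),
      (uT n T x = x ↔
        ∃ (K : Finset (Fin n)) (y z : ℝ),
          y ∈ Set.Icc 0 T ∧ T ≤ z ∧
          y * Real.exp (-y / T) = z * Real.exp (-z / T) ∧
          (K.card : ℝ) * y + ((n : ℝ) - K.card) * z = 1 ∧
          (∀ i ∈ K, x i = y) ∧ (∀ i ∉ K, x i = z)) :=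
  fun x _ => complete_graph_fixed_point_two_level_characterization_general hn hT x
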